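/- Let n ≥ 8 be divisible by 4 and let H be a saturated orthogonal array OA(n,n−1,2,2). Then the sum of J₄(S)² over all unordered 4-subsets S of the n−1 columns of H equals n²(n−1)(n−2)(n−4)/24. -/

import Mathlib

open Finset

/-!
Expanding the squares and summing over `S` first, `∑ J₄(S)²` becomes a sum over pairs of rows
`(i, k)` of the fourth elementary symmetric function of the family `j ↦ H i j * H k j`. The entries
of this family square to `1`, so Newton's identities express that function through the single
power sum `∑ j, H i j * H k j`. Bordering the array with a column of ones gives a Hadamard matrix,
whose rows are therefore orthogonal as well: the power sum is `n - 1` for `i = k` and `-1`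
otherwise.
-/

section ElementarySymmetric

open MvPolynomial

variable {κ R : Type*} [Fintype κ] [CommRing R]

theorem mul_aeval_esymm_eq_sum_range (x : κ → R) (m : ℕ) :
    m * aeval x (esymm κ R m) =
      (-1) ^ (m + 1) * ∑ i ∈ range m, (-1) ^ i * aeval x (esymm κ R i) * ∑ j, x j ^ (m - i) := by
  have newton := congrArg (aeval x) (mul_esymm_eq_sum κ R m)
  simp only [sum_filter, Nat.sum_antidiagonal_eq_sum_range_succ_mk, sum_range_succ, lt_irrefl,
    if_false, add_zero, map_mul, map_natCast, map_pow, map_neg, map_one, map_sum] at newton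
  rw [newton]
  congr 1
  refine sum_congr rfl fun i hi ↦ ?_
  simp [mem_range.mp hi, psum]

/-- The power sums of `x` have period two, so the tail of Newton's identity for `m + 2` is
Newton's identity for `m`. -/
theorem add_two_mul_aeval_esymm_of_sq_eq_one {x : κ → R} (hx : ∀ j, x j ^ 2 = 1) (m : ℕ) :
    (m + 2) * aeval x (esymm κ R (m + 2)) =
      (∑ j, x j) * aeval x (esymm κ R (m + 1)) -
        (Fintype.card κ - m) * aeval x (esymm κ R m) := by
  have tail : ∑ i ∈ range m, (-1) ^ i * aeval x (esymm κ R i) * ∑ j, x j ^ (m + 2 - i) =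
      ∑ i ∈ range m, (-1) ^ i * aeval x (esymm κ R i) * ∑ j, x j ^ (m - i) := by
    refine sum_congr rfl fun i hi ↦ ?_
    rw [Nat.sub_add_comm (mem_range.mp hi).le]
    simp only [pow_add, hx, mul_one]
  have newton := mul_aeval_esymm_eq_sum_range x (m + 2)
  have newton' := mul_aeval_esymm_eq_sum_range x m
  have sign : (-1 : R) ^ m * (-1) ^ m = 1 := by rw [← mul_pow, neg_mul_neg, one_mul, one_pow]
  rw [sum_range_succ, sum_range_succ, tail] at newton
  simp only [Nat.add_sub_cancel_left, Nat.add_sub_add_left, hx, sum_const, card_univ,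
    nsmul_eq_mul, Nat.reduceSub, pow_one, mul_one] at newton
  push_cast at newton
  linear_combination newton - newton' + ((∑ j, x j) * aeval x (esymm κ R (m + 1)) -
    Fintype.card κ * aeval x (esymm κ R m)) * sign

theorem twentyFour_mul_sum_prod_of_sq_eq_one {x : κ → R} (hx : ∀ j, x j ^ 2 = 1) :
    24 * ∑ S ∈ powersetCard 4 univ, ∏ j ∈ S, x j =
      (∑ j, x j) ^ 4 - (6 * Fintype.card κ - 8) * (∑ j, x j) ^ 2 +
        3 * Fintype.card κ * (Fintype.card κ - 2) := by
  have e₁ : aeval x (esymm κ R 1) = ∑ j, x j := by simp [esymm_one]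
  have e₂ := add_two_mul_aeval_esymm_of_sq_eq_one hx 0
  have e₃ := add_two_mul_aeval_esymm_of_sq_eq_one hx 1
  have e₄ := add_two_mul_aeval_esymm_of_sq_eq_one hx 2
  have h : aeval x (esymm κ R 4) = ∑ S ∈ powersetCard 4 univ, ∏ j ∈ S, x j := by simp [esymm]
  simp only [Nat.reduceAdd, zero_add, esymm_zero, map_one, e₁] at e₂ e₃ e₄
  push_cast at e₂ e₃ e₄
  rw [← h]
  set s := ∑ j, x j
  set N := (Fintype.card κ : R)
  linear_combination 6 * e₄ + 2 * s * e₃ + (s ^ 2 - 3 * (N - 2)) * e₂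

end ElementarySymmetric

section JCharacteristic

variable {ι κ R : Type*} [Fintype ι] [CommSemiring R]

/-- The `J`-characteristic of a set `S` of columns of the design `H`; its order is `#S`. -/
def jChar (H : Matrix ι κ R) (S : Finset κ) : R := ∑ i, ∏ j ∈ S, H i j

theorem sum_jChar_sq (H : Matrix ι κ R) (𝒮 : Finset (Finset κ)) :
    ∑ S ∈ 𝒮, jChar H S ^ 2 = ∑ i, ∑ k, ∑ S ∈ 𝒮, ∏ j ∈ S, H i j * H k j := by
  simp only [jChar, sq, sum_mul_sum, prod_mul_distrib]
  rw [sum_comm]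
  exact sum_congr rfl fun i _ ↦ sum_comm

end JCharacteristic

/-- A saturated orthogonal array `OA(n, n-1, 2, 2)` with runs `ι` and factors `κ`. The two
levels are encoded by `a ^ 2 = 1`, which in a domain means `a = 1 ∨ a = -1`. -/
structure IsSaturatedOA {ι κ R : Type*} [Fintype ι] [Fintype κ] [CommRing R]
    (H : Matrix ι κ R) : Prop where
  card_eq : Fintype.card ι = Fintype.card κ + 1
  sq_eq_one : ∀ i j, H i j ^ 2 = 1
  sum_col : ∀ j, ∑ i, H i j = 0
  sum_mul_col : ∀ j k, j ≠ k → ∑ i, H i j * H i k = 0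

namespace IsSaturatedOA

open Matrix

variable {ι κ R : Type*} [Fintype ι] [Fintype κ] [CommRing R] {H : Matrix ι κ R}

theorem sum_row_mul_self (hH : IsSaturatedOA H) (i : ι) :
    ∑ j, H i j * H i j = Fintype.card ι - 1 := by
  simp [← sq, hH.sq_eq_one, hH.card_eq]

/-- `e` identifies the rows with the columns of the bordered array, to make the matrix square. -/
theorem isHadamard_bordered [DecidableEq ι] [StarRing R] [TrivialStar R] (hH : IsSaturatedOA H)
    (hcard : IsRegular (Fintype.card ι : R)) (e : ι ≃ Option κ) :
    (Matrix.of fun i k ↦ (e k).elim 1 (H i)).IsHadamard := by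
  classical
  rw [← isHadamard_conjTranspose_iff]
  refine .of_mul_conjTranspose ?_ ?_ hcard
  · intro k i
    cases h : e k <;> simp [Unitary.mem_iff, h, ← sq, hH.sq_eq_one]
  · ext k l
    obtain ⟨a, rfl⟩ := e.symm.surjective k
    obtain ⟨b, rfl⟩ := e.symm.surjective l
    rcases a with _ | a <;> rcases b with _ | b
    · simp [mul_apply]
    · simp [mul_apply, hH.sum_col]
    · simp [mul_apply, hH.sum_col]
    · obtain rfl | hab := eq_or_ne a b
      · simp [mul_apply, ← sq, hH.sq_eq_one]
      · simp [mul_apply, hH.sum_mul_col a b hab, hab]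

theorem sum_row_mul_of_ne (hH : IsSaturatedOA H) (hcard : IsRegular (Fintype.card ι : R))
    {i k : ι} (hik : i ≠ k) : ∑ j, H i j * H k j = -1 := by
  classical
  let _ : StarRing R := starRingOfComm
  have _ : TrivialStar R := ⟨fun _ ↦ rfl⟩
  let e : ι ≃ Option κ := Fintype.equivOfCardEq (by simp [hH.card_eq])
  have rows := congrFun₂ (hH.isHadamard_bordered hcard e).mul_conjTranspose i k
  have bordered : ∑ l, (e l).elim 1 (H i) * (e l).elim 1 (H k) = 1 + ∑ j, H i j * H k j := by
    rw [e.sum_comp fun o ↦ o.elim 1 (H i) * o.elim 1 (H k), Fintype.sum_option]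
    simp
  simp only [mul_apply, of_apply, conjTranspose_apply, star_trivial, bordered, Matrix.smul_apply,
    one_apply_ne hik, smul_zero] at rows
  exact eq_neg_of_add_eq_zero_right rows

theorem twentyFour_mul_sum_prod_row_mul [DecidableEq ι] (hH : IsSaturatedOA H)
    (hcard : IsRegular (Fintype.card ι : R)) (i k : ι) :
    24 * ∑ S ∈ powersetCard 4 univ, ∏ j ∈ S, H i j * H k j =
      (Fintype.card ι - 2) * (Fintype.card ι - 4) *
        (3 + if i = k then (Fintype.card ι : R) * (Fintype.card ι - 4) else 0) := by
  have hx : ∀ j, (H i j * H k j) ^ 2 = 1 := fun j ↦ by simp [mul_pow, hH.sq_eq_one]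
  have hκ : (Fintype.card κ : R) = Fintype.card ι - 1 := by simp [hH.card_eq]
  rw [twentyFour_mul_sum_prod_of_sq_eq_one hx, hκ]
  split_ifs with hik
  · rw [← hik, hH.sum_row_mul_self]
    ring
  · rw [hH.sum_row_mul_of_ne hcard hik]
    ring

end IsSaturatedOA

theorem sum_J4_sq_saturated_general {ι κ R : Type*} [Fintype ι] [Fintype κ] [CommRing R]
    {H : Matrix ι κ R} (hH : IsSaturatedOA H) (hcard : IsRegular (Fintype.card ι : R)) :
    24 * ∑ S ∈ powersetCard 4 univ, jChar H S ^ 2 =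
      (Fintype.card ι : R) ^ 2 * (Fintype.card ι - 1) * (Fintype.card ι - 2) *
        (Fintype.card ι - 4) := by
  classical
  rw [sum_jChar_sq]
  simp only [mul_sum (univ : Finset ι), hH.twentyFour_mul_sum_prod_row_mul hcard,
    ← mul_sum, sum_add_distrib, sum_ite_eq, mem_univ, if_true, sum_const, card_univ, nsmul_eq_mul]
  ring

/-- For a saturated orthogonal array `OA(n, n-1, 2, 2)`, the sum of
`J₄(S)²` over all unordered 4-subsets `S` of the `n-1` columns equals
`n²(n-1)(n-2)(n-4)/24`. -/
theorem sum_J4_sq_saturated (n : ℕ) (hn : 8 ≤ n) (h4 : 4 ∣ n)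
    (H : Fin n → Fin (n - 1) → ℤ)
    (hpm : ∀ i j, H i j = 1 ∨ H i j = -1)
    (hbal : ∀ j, ∑ i : Fin n, H i j = 0)
    (horth : ∀ j k : Fin (n - 1), j ≠ k → ∑ i : Fin n, H i j * H i k = 0) :
    ∑ S ∈ (Finset.univ : Finset (Fin (n - 1))).powersetCard 4,
        (∑ i : Fin n, ∏ j ∈ S, H i j) ^ 2
      = (n : ℤ) ^ 2 * ((n : ℤ) - 1) * ((n : ℤ) - 2) * ((n : ℤ) - 4) / 24 := by
  have hH : IsSaturatedOA (Matrix.of H) :=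
    ⟨by simp; omega, fun i j ↦ sq_eq_one_iff.mpr (hpm i j), hbal, horth⟩
  have key := sum_J4_sq_saturated_general hH (.of_ne_zero (by simp; omega))
  rw [Fintype.card_fin] at key
  exact Int.eq_ediv_of_mul_eq_right (by norm_num) key
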